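/- arXiv:2105.04415 — 4 statements merged into one kernel-verified Lean document; each statement's English description precedes it below -/
import Mathlib

section
/- Let (Fₙ) be the Fibonacci sequence with F₁ = F₂ = 1 and F_{n+2} = F_{n+1} + F_n. Then the sequence aₙ = 3^{Fₙ} / 2^{F_{n+1}} converges to 0 as n → ∞. -/
open Filter

lemma aux_bound (n : ℕ) :
    (3 : ℝ) ^ (Nat.fib (n + 6)) / (2 : ℝ) ^ (Nat.fib (n + 6 + 1))
      ≤ (243 / 256 : ℝ) ^ Nat.fib (n + 2) := by
  induction n using Nat.twoStepInduction with
  | zero => norm_num [Nat.fib_add_two]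
  | one => norm_num [Nat.fib_add_two]
  | more n h1 h2 =>
    have e1 : Nat.fib (n + 2 + 6) = Nat.fib (n + 6) + Nat.fib (n + 1 + 6) :=
      Nat.fib_add_two (n := n + 6)
    have e2 : Nat.fib (n + 2 + 6 + 1) = Nat.fib (n + 6 + 1) + Nat.fib (n + 1 + 6 + 1) :=
      Nat.fib_add_two (n := n + 7)
    have e3 : Nat.fib (n + 2 + 2) = Nat.fib (n + 2) + Nat.fib (n + 1 + 2) :=
      Nat.fib_add_two (n := n + 2)
    rw [e1, e2, e3, pow_add, pow_add, pow_add, mul_div_mul_comm]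
    exact mul_le_mul h1 h2 (by positivity) (by positivity)

/-- The sequence aₙ = 3^{Fₙ} / 2^{F_{n+1}} tends to 0. -/
theorem tendsto_three_pow_fib_div_two_pow_fib_succ :
    Tendsto (fun n : ℕ => (3 : ℝ) ^ (Nat.fib n) / (2 : ℝ) ^ (Nat.fib (n + 1)))
      atTop (nhds 0) := by
  rw [← tendsto_add_atTop_iff_nat 6]
  have h : Tendsto (fun n : ℕ => (243 / 256 : ℝ) ^ Nat.fib (n + 2)) atTop (nhds 0) :=
    (tendsto_pow_atTop_nhds_zero_of_lt_one (by norm_num) (by norm_num)).comp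
      Nat.fib_add_two_strictMono.tendsto_atTop
  exact squeeze_zero (fun n => by positivity) aux_bound h
end

section
/- Let (Fₙ) be the Fibonacci sequence with F₁ = F₂ = 1 and F_{n+2} = F_{n+1} + F_n. Then there exists N such that for all n ≥ N, 3^{Fₙ} / 2^{F_{n+1}} < 1/n. -/
/-- `5 F_{n+6} = 8 F_{n+5} + F_n`. -/
theorem aux_fib (n : ℕ) : 5 * Nat.fib (n + 6) = 8 * Nat.fib (n + 5) + Nat.fib n := by
  have h2 : Nat.fib (n + 2) = Nat.fib n + Nat.fib (n + 1) := Nat.fib_add_two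
  have h3 : Nat.fib (n + 3) = Nat.fib (n + 1) + Nat.fib (n + 2) := Nat.fib_add_two
  have h4 : Nat.fib (n + 4) = Nat.fib (n + 2) + Nat.fib (n + 3) := Nat.fib_add_two
  have h5 : Nat.fib (n + 5) = Nat.fib (n + 3) + Nat.fib (n + 4) := Nat.fib_add_two
  have h6 : Nat.fib (n + 6) = Nat.fib (n + 4) + Nat.fib (n + 5) := Nat.fib_add_two
  omega

theorem aux_pow (k : ℕ) : (k + 30) ^ 5 < 2 ^ (k + 25) := by
  induction k with
  | zero => norm_num
  | succ k ih =>
    have h : (k + 1 + 30) ^ 5 ≤ 2 * (k + 30) ^ 5 := by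
      have h1 : (30 * (k + 1 + 30)) ^ 5 ≤ (31 * (k + 30)) ^ 5 :=
        Nat.pow_le_pow_left (by omega) 5
      rw [mul_pow, mul_pow] at h1
      generalize (k + 1 + 30) ^ 5 = a at *
      generalize (k + 30) ^ 5 = b at *
      norm_num at h1
      linarith
    calc (k + 1 + 30) ^ 5 ≤ 2 * (k + 30) ^ 5 := h
      _ < 2 * 2 ^ (k + 25) := Nat.mul_lt_mul_of_pos_left ih (by norm_num)
      _ = 2 ^ (k + 1 + 25) := by ring

theorem aux_nat (k : ℕ) :
    3 ^ Nat.fib (k + 30) * (k + 30) < 2 ^ Nat.fib (k + 31) := by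
  refine lt_of_pow_lt_pow_left₀ 5 (Nat.zero_le _) ?_
  have hf : 5 * Nat.fib (k + 31) = 8 * Nat.fib (k + 30) + Nat.fib (k + 25) := aux_fib (k + 25)
  have hle : k + 25 ≤ Nat.fib (k + 25) := Nat.le_fib_self (by omega)
  calc (3 ^ Nat.fib (k + 30) * (k + 30)) ^ 5
      = (3 ^ 5) ^ Nat.fib (k + 30) * (k + 30) ^ 5 := by
        rw [mul_pow, ← pow_mul, ← pow_mul, mul_comm 5]
    _ ≤ (2 ^ 8) ^ Nat.fib (k + 30) * (k + 30) ^ 5 := by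
        gcongr ?_ * _
        exact Nat.pow_le_pow_left (by norm_num) _
    _ < (2 ^ 8) ^ Nat.fib (k + 30) * 2 ^ Nat.fib (k + 25) := by
        refine Nat.mul_lt_mul_of_pos_left ?_ (by positivity)
        exact (aux_pow k).trans_le (Nat.pow_le_pow_right (by norm_num) hle)
    _ = (2 ^ Nat.fib (k + 31)) ^ 5 := by
        rw [← pow_mul, ← pow_mul, ← pow_add, mul_comm _ 5, hf]

/-- Eventually 3^{Fₙ} / 2^{F_{n+1}} < 1/n. -/
theorem three_pow_fib_div_two_pow_fib_succ_lt_one_div :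
    ∃ N : ℕ, ∀ n : ℕ, N ≤ n →
      (3 : ℝ) ^ (Nat.fib n) / (2 : ℝ) ^ (Nat.fib (n + 1)) < 1 / n := by
  refine ⟨30, fun n hn => ?_⟩
  obtain ⟨k, rfl⟩ := Nat.exists_eq_add_of_le' hn
  rw [div_lt_div_iff₀ (by positivity) (by positivity), one_mul]
  exact_mod_cast aux_nat k
end

section
/- Let (Fₙ) be the Fibonacci sequence with F₁ = F₂ = 1 and F_{n+2} = F_{n+1} + F_n, and let π denote the prime counting function. Then for every n ≥ 2, π(F_{n+1}) > π(Fₙ); that is, there is at least one prime p with Fₙ < p ≤ F_{n+1}. -/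
open Nat

open ArithmeticFunction in
/-- The sum of the von Mangoldt function up to `N`. -/
noncomputable def psiN (N : ℕ) : ℝ := ∑ d ∈ Finset.Ioc 0 N, vonMangoldt d

lemma psiN_eq (N : ℕ) : psiN N = Chebyshev.psi (N : ℝ) := by
  simp [psiN, Chebyshev.psi]

open ArithmeticFunction in
lemma log_factorial_eq (M N : ℕ) (h : N ≤ M) :
    Real.log (N ! : ℝ) = ∑ d ∈ Finset.Ioc 0 M, vonMangoldt d * ((N / d : ℕ) : ℝ) := by
  induction N with
  | zero => simp
  | succ N ih =>
    have hs : ∑ d ∈ Finset.Ioc 0 M, vonMangoldt d * (if d ∣ N + 1 then (1 : ℝ) else 0)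
        = Real.log ((N + 1 : ℕ) : ℝ) := by
      rw [← vonMangoldt_sum]
      simp only [mul_ite, mul_one, mul_zero]
      rw [← Finset.sum_filter]
      apply Finset.sum_congr _ (fun _ _ => rfl)
      ext d
      simp only [Finset.mem_filter, Finset.mem_Ioc, Nat.mem_divisors]
      constructor
      · rintro ⟨_, h2⟩
        exact ⟨h2, by omega⟩
      · rintro ⟨h1, _⟩
        have := Nat.le_of_dvd (by omega) h1
        have := Nat.pos_of_dvd_of_pos h1 (by omega)
        exact ⟨⟨by omega, by omega⟩, h1⟩
    rw [Nat.factorial_succ, Nat.cast_mul, Real.log_mul (by positivity) (by positivity),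
      ih (by omega), ← hs, ← Finset.sum_add_distrib]
    apply Finset.sum_congr rfl
    intro d _
    rw [Nat.succ_div]
    split_ifs <;> push_cast <;> ring

/-- The combination used in the Chebyshev-type argument. -/
noncomputable def chebS (N : ℕ) : ℝ :=
  Real.log (N ! : ℝ) - Real.log ((N / 2)! : ℝ) - Real.log ((N / 3)! : ℝ)
    - Real.log ((N / 6)! : ℝ)

open ArithmeticFunction in
lemma chebS_eq (N : ℕ) : chebS N = ∑ d ∈ Finset.Ioc 0 N, vonMangoldt d *
    (((N / d : ℕ) : ℝ) - ((N / d / 2 : ℕ) : ℝ) - ((N / d / 3 : ℕ) : ℝ)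
      - ((N / d / 6 : ℕ) : ℝ)) := by
  unfold chebS
  rw [log_factorial_eq N N le_rfl, log_factorial_eq N (N / 2) (Nat.div_le_self _ _),
    log_factorial_eq N (N / 3) (Nat.div_le_self _ _),
    log_factorial_eq N (N / 6) (Nat.div_le_self _ _), ← Finset.sum_sub_distrib,
    ← Finset.sum_sub_distrib, ← Finset.sum_sub_distrib]
  apply Finset.sum_congr rfl
  intro d _
  rw [Nat.div_right_comm N 2 d, Nat.div_right_comm N 3 d, Nat.div_right_comm N 6 d]
  ring

open ArithmeticFunction in
lemma psiN_div (N k : ℕ) (hk : 0 < k) : psiN (N / k) =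
    ∑ d ∈ Finset.Ioc 0 N, vonMangoldt d * (if k ≤ N / d then (1 : ℝ) else 0) := by
  unfold psiN
  simp only [mul_ite, mul_one, mul_zero]
  rw [← Finset.sum_filter]
  apply Finset.sum_congr _ (fun _ _ => rfl)
  ext d
  simp only [Finset.mem_filter, Finset.mem_Ioc]
  constructor
  · rintro ⟨h1, h2⟩
    refine ⟨⟨h1, h2.trans (Nat.div_le_self _ _)⟩, ?_⟩
    rw [Nat.le_div_iff_mul_le hk] at h2
    rw [Nat.le_div_iff_mul_le h1, mul_comm]
    exact h2
  · rintro ⟨⟨h1, _⟩, h2⟩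
    rw [Nat.le_div_iff_mul_le h1, mul_comm] at h2
    exact ⟨h1, (Nat.le_div_iff_mul_le hk).2 h2⟩

lemma psiN_sub_le (N : ℕ) : psiN N - psiN (N / 6) ≤ chebS N := by
  have h1 := psiN_div N 1 one_pos
  rw [Nat.div_one] at h1
  rw [chebS_eq, h1, psiN_div N 6 (by norm_num), ← Finset.sum_sub_distrib]
  apply Finset.sum_le_sum
  intro d _
  rw [← mul_sub]
  apply mul_le_mul_of_nonneg_left _ ArithmeticFunction.vonMangoldt_nonneg
  generalize N / d = m
  have key : (if 1 ≤ m then 1 else 0) + m / 2 + m / 3 + m / 6 ≤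
      m + (if 6 ≤ m then 1 else 0) := by
    split_ifs <;> omega
  have key' : (((if 1 ≤ m then 1 else 0) + m / 2 + m / 3 + m / 6 : ℕ) : ℝ) ≤
      ((m + (if 6 ≤ m then 1 else 0) : ℕ) : ℝ) := by exact_mod_cast key
  simp only [Nat.cast_add, Nat.cast_ite, Nat.cast_one, Nat.cast_zero] at key'
  linarith

lemma chebS_le (N : ℕ) : chebS N ≤ psiN N + psiN (N / 5) := by
  have h1 := psiN_div N 1 one_pos
  rw [Nat.div_one] at h1
  rw [chebS_eq, h1, psiN_div N 5 (by norm_num), ← Finset.sum_add_distrib]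
  apply Finset.sum_le_sum
  intro d _
  rw [← mul_add]
  apply mul_le_mul_of_nonneg_left _ ArithmeticFunction.vonMangoldt_nonneg
  generalize N / d = m
  have key : m ≤ (if 1 ≤ m then 1 else 0) + (if 5 ≤ m then 1 else 0)
      + m / 2 + m / 3 + m / 6 := by
    split_ifs <;> omega
  have key' : (m : ℝ) ≤ (((if 1 ≤ m then 1 else 0) + (if 5 ≤ m then 1 else 0)
      + m / 2 + m / 3 + m / 6 : ℕ) : ℝ) := by exact_mod_cast key
  simp only [Nat.cast_add, Nat.cast_ite, Nat.cast_one, Nat.cast_zero] at key'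
  linarith

lemma xlogx_mono {x y : ℝ} (hx : 1 ≤ x) (hxy : x ≤ y) :
    x * Real.log x - x ≤ y * Real.log y - y := by
  have hx0 : 0 < x := by linarith
  have hy : 0 < y := by linarith
  have h1 : Real.log (x / y) ≤ x / y - 1 := Real.log_le_sub_one_of_pos (by positivity)
  rw [Real.log_div hx0.ne' hy.ne'] at h1
  have h2 := mul_le_mul_of_nonneg_left h1 hy.le
  have h3 : y * (x / y - 1) = x - y := by field_simp
  have h4 : 0 ≤ (y - x) * Real.log x := mul_nonneg (by linarith) (Real.log_nonneg hx)
  nlinarith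

/-- Both elementary Stirling bounds at natural numbers. -/
lemma log_factorial_bounds (n : ℕ) (hn : 1 ≤ n) :
    (n : ℝ) * Real.log n - n ≤ Real.log (n ! : ℝ) ∧
    Real.log (n ! : ℝ) ≤ (n : ℝ) * Real.log n - n + Real.log n + 1 := by
  induction n, hn using Nat.le_induction with
  | base => simp
  | succ n hn ih =>
    have hn0 : (0 : ℝ) < n := by exact_mod_cast hn
    have hn1 : (0 : ℝ) < (n : ℝ) + 1 := by linarith
    rw [Nat.factorial_succ, Nat.cast_mul, Real.log_mul (by positivity) (by positivity)]
    push_cast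
    have a1 : Real.log ((n + 1) / n : ℝ) ≤ (n + 1) / n - 1 :=
      Real.log_le_sub_one_of_pos (by positivity)
    have a2 : Real.log (n / (n + 1) : ℝ) ≤ n / (n + 1) - 1 :=
      Real.log_le_sub_one_of_pos (by positivity)
    rw [Real.log_div hn1.ne' hn0.ne'] at a1
    rw [Real.log_div hn0.ne' hn1.ne'] at a2
    have b1 := mul_le_mul_of_nonneg_left a1 hn0.le
    have b2 := mul_le_mul_of_nonneg_left a2 hn1.le
    have c1 : (n : ℝ) * ((n + 1) / n - 1) = 1 := by field_simp; ring
    have c2 : ((n : ℝ) + 1) * (n / (n + 1) - 1) = -1 := by field_simp; ring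
    constructor
    · nlinarith [ih.1]
    · nlinarith [ih.2]

lemma log_factorial_div_bounds (N k : ℕ) (hk : 0 < k) (hN : k ≤ N) :
    (N / k : ℝ) * Real.log (N / k) - N / k - Real.log (N / k + 1) ≤ Real.log ((N / k)! : ℝ) ∧
    Real.log ((N / k)! : ℝ) ≤
      (N / k : ℝ) * Real.log (N / k) - N / k + Real.log (N / k) + 1 := by
  have hk' : (0 : ℝ) < k := by exact_mod_cast hk
  have hn : 1 ≤ N / k := (Nat.one_le_div_iff hk).2 hN
  have hn' : (1 : ℝ) ≤ ((N / k : ℕ) : ℝ) := by exact_mod_cast hn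
  have h1 : ((N / k : ℕ) : ℝ) ≤ (N : ℝ) / k := Nat.cast_div_le
  have h2 : (N : ℝ) / k ≤ ((N / k : ℕ) : ℝ) + 1 := by
    rw [div_le_iff₀ hk']
    have := Nat.lt_mul_div_succ N hk
    have h3 : (N : ℝ) < ((k * (N / k + 1) : ℕ) : ℝ) := by exact_mod_cast this
    push_cast at h3
    push_cast
    linarith
  generalize (N : ℝ) / k = x at *
  generalize N / k = n at *
  constructor
  · have h3 := (log_factorial_bounds (n + 1) (by omega)).1
    rw [Nat.factorial_succ, Nat.cast_mul, Real.log_mul (by positivity) (by positivity)] at h3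
    push_cast at h3
    have h4 := xlogx_mono (by linarith) h2
    have h5 : Real.log ((n : ℝ) + 1) ≤ Real.log (x + 1) :=
      Real.log_le_log (by linarith) (by linarith)
    linarith
  · have h3 := (log_factorial_bounds n hn).2
    have h4 := xlogx_mono hn' h1
    have h5 : Real.log (n : ℝ) ≤ Real.log x := Real.log_le_log (by linarith) h1
    linarith

lemma chebS_bounds (N : ℕ) (hN : 6 ≤ N) :
    1.0114 * (N : ℝ) - 3 * Real.log N - 3 ≤ chebS N ∧
    chebS N ≤ 1.01141 * (N : ℝ) + 4 * Real.log N + 1 := by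
  have hN' : (6 : ℝ) ≤ N := by exact_mod_cast hN
  have hN0 : (N : ℝ) ≠ 0 := by linarith
  have b1 := log_factorial_bounds N (by omega)
  have b2 := log_factorial_div_bounds N 2 (by norm_num) (by omega)
  have b3 := log_factorial_div_bounds N 3 (by norm_num) (by omega)
  have b6 := log_factorial_div_bounds N 6 (by norm_num) (by omega)
  push_cast at b2 b3 b6
  have m2 : Real.log ((N : ℝ) / 2 + 1) ≤ Real.log N :=
    Real.log_le_log (by positivity) (by linarith)
  have m3 : Real.log ((N : ℝ) / 3 + 1) ≤ Real.log N :=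
    Real.log_le_log (by positivity) (by linarith)
  have m6 : Real.log ((N : ℝ) / 6 + 1) ≤ Real.log N :=
    Real.log_le_log (by positivity) (by linarith)
  have l6 : Real.log 6 = Real.log 2 + Real.log 3 := by
    rw [← Real.log_mul (by norm_num) (by norm_num)]; norm_num
  rw [Real.log_div hN0 (by norm_num)] at b2 b3 b6
  rw [l6] at b6
  have t1 := Real.log_two_gt_d9
  have t2 := Real.log_two_lt_d9
  have t3 := Real.log_three_gt_d9
  have t4 := Real.log_three_lt_d9
  have u1 : (N : ℝ) * 1.0114 ≤ N * (2 / 3 * Real.log 2 + 1 / 2 * Real.log 3) :=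
    mul_le_mul_of_nonneg_left (by linarith) (by linarith)
  have u2 : (N : ℝ) * (2 / 3 * Real.log 2 + 1 / 2 * Real.log 3) ≤ N * 1.01141 :=
    mul_le_mul_of_nonneg_left (by linarith) (by linarith)
  unfold chebS
  obtain ⟨b1, b1'⟩ := b1
  obtain ⟨b2, b2'⟩ := b2
  obtain ⟨b3, b3'⟩ := b3
  obtain ⟨b6, b6'⟩ := b6
  constructor <;> ring_nf at * <;> linarith

lemma log_le_lin {x : ℝ} (hx : 0 < x) : Real.log x ≤ x / 10000 + 8.8 := by
  have h1 : Real.log (x / 10000) ≤ x / 10000 - 1 := Real.log_le_sub_one_of_pos (by positivity)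
  rw [Real.log_div hx.ne' (by norm_num)] at h1
  have h2 : Real.log (10000 : ℝ) ≤ 14 * Real.log 2 := by
    have : (14 : ℝ) * Real.log 2 = Real.log (2 ^ 14) := by
      rw [Real.log_pow]; norm_num
    rw [this]
    exact Real.log_le_log (by norm_num) (by norm_num)
  have := Real.log_two_lt_d9
  linarith

lemma psiN_upper (N : ℕ) : psiN N ≤ 1.22 * (N : ℝ) + 54000 := by
  induction N using Nat.strong_induction_on with
  | _ N ih =>
    rcases lt_or_ge N 10000 with h | h
    · have hN : (N : ℝ) ≤ 10000 := by exact_mod_cast h.le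
      have h0 : (0 : ℝ) ≤ N := Nat.cast_nonneg N
      have h1 := Chebyshev.psi_le_const_mul_self h0
      have l4 : Real.log 4 = 2 * Real.log 2 := by
        rw [show (4 : ℝ) = 2 ^ 2 by norm_num, Real.log_pow]; norm_num
      have := Real.log_two_lt_d9
      rw [psiN_eq]
      have h2 : (Real.log 4 + 4) * (N : ℝ) ≤ 5.4 * N :=
        mul_le_mul_of_nonneg_right (by linarith) h0
      linarith
    · have hN : (10000 : ℝ) ≤ N := by exact_mod_cast h
      have h1 := ih (N / 6) (by omega)
      have h2 := psiN_sub_le N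
      have h3 := (chebS_bounds N (by omega)).2
      have h4 : ((N / 6 : ℕ) : ℝ) ≤ (N : ℝ) / 6 := by exact_mod_cast Nat.cast_div_le
      have h5 := log_le_lin (x := N) (by linarith)
      linarith

lemma psiN_lower (N : ℕ) (hN : 6 ≤ N) :
    0.7674 * (N : ℝ) - 54003 - 3 * Real.log N ≤ psiN N := by
  have h1 := psiN_upper (N / 5)
  have h2 := chebS_le N
  have h3 := (chebS_bounds N hN).1
  have h4 : ((N / 5 : ℕ) : ℝ) ≤ (N : ℝ) / 5 := by exact_mod_cast Nat.cast_div_le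
  linarith

lemma exists_prime_large (y x : ℕ) (hx : 100000000 ≤ x) (hxy : 1617 * y ≤ 1000 * x) :
    ∃ p : ℕ, p.Prime ∧ y < p ∧ p ≤ x := by
  by_contra hcon
  push Not at hcon
  have hx' : (100000000 : ℝ) ≤ x := by exact_mod_cast hx
  have hxy' : 1617 * (y : ℝ) ≤ 1000 * x := by exact_mod_cast hxy
  have hθ : Chebyshev.theta (x : ℝ) ≤ Chebyshev.theta (y : ℝ) := by
    unfold Chebyshev.theta
    rw [Nat.floor_natCast, Nat.floor_natCast]
    apply Finset.sum_le_sum_of_subset_of_nonneg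
    · intro p hp
      simp only [Finset.mem_filter, Finset.mem_Ioc] at hp ⊢
      refine ⟨⟨hp.1.1, ?_⟩, hp.2⟩
      by_contra h
      have := hcon p hp.2 (by omega)
      omega
    · intro p _ _
      exact Real.log_natCast_nonneg p
  have h1 := Chebyshev.psi_sub_theta_le (x := (x : ℝ)) (by linarith)
  have h2 := Chebyshev.theta_le_psi (y : ℝ)
  have h3 := psiN_lower x (by omega)
  have h4 := psiN_upper y
  rw [psiN_eq] at h3 h4
  have hs : (10000 : ℝ) ≤ √(x : ℝ) := by
    apply Real.le_sqrt_of_sq_le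
    linarith
  have hss : √(x : ℝ) * √(x : ℝ) = x := Real.mul_self_sqrt (by linarith)
  have hl : Real.log (x : ℝ) = 2 * Real.log (√(x : ℝ)) := by
    rw [Real.log_sqrt (by linarith)]; ring
  have h5 := log_le_lin (x := √(x : ℝ)) (by linarith)
  generalize √(x : ℝ) = s at *
  have h6 : Real.log (x : ℝ) ≤ 0.002 * s := by linarith
  have h7 : 2 * s * Real.log (x : ℝ) ≤ 2 * s * (0.002 * s) :=
    mul_le_mul_of_nonneg_left h6 (by linarith)
  have h8 : 2 * s * (0.002 * s) = 0.004 * x := by rw [← hss]; ring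
  have h9 : s ≤ x := by nlinarith
  linarith

lemma fib_ratio (n : ℕ) (hn : 39 ≤ n) :
    1617 * Nat.fib n ≤ 1000 * Nat.fib (n + 1) ∧ 100 * Nat.fib (n + 1) ≤ 162 * Nat.fib n := by
  induction n, hn using Nat.le_induction with
  | base => norm_num
  | succ n hn ih =>
    have := Nat.fib_add_two (n := n)
    rw [show n + 1 + 1 = n + 2 from rfl, this]
    omega

lemma exists_prime_fib (n : ℕ) (hn : 2 ≤ n) :
    ∃ p : ℕ, p.Prime ∧ Nat.fib n < p ∧ p ≤ Nat.fib (n + 1) := by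
  rcases lt_or_ge n 39 with h | h
  · interval_cases n
    · exact ⟨2, by norm_num⟩
    · exact ⟨3, by norm_num⟩
    · exact ⟨5, by norm_num⟩
    · exact ⟨7, by norm_num⟩
    · exact ⟨11, by norm_num⟩
    · exact ⟨17, by norm_num⟩
    · exact ⟨23, by norm_num⟩
    · exact ⟨37, by norm_num⟩
    · exact ⟨59, by norm_num⟩
    · exact ⟨97, by norm_num⟩
    · exact ⟨149, by norm_num⟩
    · exact ⟨239, by norm_num⟩
    · exact ⟨379, by norm_num⟩
    · exact ⟨613, by norm_num⟩
    · exact ⟨991, by norm_num⟩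
    · exact ⟨1601, by norm_num⟩
    · exact ⟨2591, by norm_num⟩
    · exact ⟨4201, by norm_num⟩
    · exact ⟨6779, by norm_num⟩
    · exact ⟨10949, by norm_num⟩
    · exact ⟨17713, by norm_num⟩
    · exact ⟨28661, by norm_num⟩
    · exact ⟨46381, by norm_num⟩
    · exact ⟨75029, by norm_num⟩
    · exact ⟨121403, by norm_num⟩
    · exact ⟨196429, by norm_num⟩
    · exact ⟨317827, by norm_num⟩
    · exact ⟨514243, by norm_num⟩
    · exact ⟨832063, by norm_num⟩
    · exact ⟨1346273, by norm_num⟩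
    · exact ⟨2178313, by norm_num⟩
    · exact ⟨3524603, by norm_num⟩
    · exact ⟨5702897, by norm_num⟩
    · exact ⟨9227479, by norm_num⟩
    · exact ⟨14930387, by norm_num⟩
    · exact ⟨24157823, by norm_num⟩
    · exact ⟨39088193, by norm_num⟩
  · apply exists_prime_large _ _ _ (fib_ratio n h).1
    calc 100000000 ≤ Nat.fib 40 := by norm_num
      _ ≤ Nat.fib (n + 1) := Nat.fib_mono (by omega)

/-- For n ≥ 2, π(F_{n+1}) > π(Fₙ): there is a prime p with Fₙ < p ≤ F_{n+1}. -/
theorem primeCounting_fib_strict_mono :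
    ∀ n : ℕ, 2 ≤ n →
      Nat.primeCounting (Nat.fib n) < Nat.primeCounting (Nat.fib (n + 1)) ∧
      ∃ p : ℕ, p.Prime ∧ Nat.fib n < p ∧ p ≤ Nat.fib (n + 1) := by
  intro n hn
  obtain ⟨p, hp, h1, h2⟩ := exists_prime_fib n hn
  refine ⟨?_, p, hp, h1, h2⟩
  calc Nat.primeCounting (Nat.fib n) ≤ Nat.primeCounting (p - 1) :=
        Nat.monotone_primeCounting (by omega)
    _ < Nat.primeCounting p := by
        obtain ⟨q, rfl⟩ : ∃ q, p = q + 1 := ⟨p - 1, by have := hp.pos; omega⟩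
        simp only [Nat.add_sub_cancel, Nat.primeCounting, Nat.primeCounting']
        rw [Nat.count_succ _ (q + 1)]
        simp [hp]
    _ ≤ Nat.primeCounting (Nat.fib (n + 1)) := Nat.monotone_primeCounting h2
end

section
/- Let n be a positive integer. Then the greatest common divisor of the set { C(n,k) : 1 ≤ k ≤ n, gcd(k,n) = 1 } of binomial coefficients equals n. -/
/-- The gcd of the binomial coefficients C(n,k) over 1 ≤ k ≤ n with
gcd(k,n) = 1 equals n. -/
theorem gcd_binomials_coprime_eq (n : ℕ) (hn : 0 < n) :
    Finset.gcd ((Finset.Icc 1 n).filter fun k => Nat.gcd k n = 1)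
      (fun k => Nat.choose n k) = n := by
  apply Nat.dvd_antisymm
  · have h : (1 : ℕ) ∈ (Finset.Icc 1 n).filter fun k => Nat.gcd k n = 1 := by
      simp only [Finset.mem_filter, Finset.mem_Icc, Nat.gcd_one_left, and_true]
      omega
    have h2 := Finset.gcd_dvd (f := fun k => Nat.choose n k) h
    simpa only [Nat.choose_one_right] using h2
  · apply Finset.dvd_gcd
    intro k hk
    simp only [Finset.mem_filter, Finset.mem_Icc] at hk
    obtain ⟨⟨h1, h2⟩, h3⟩ := hk
    obtain ⟨m, rfl⟩ : ∃ m, n = m + 1 := ⟨n - 1, by omega⟩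
    obtain ⟨j, rfl⟩ : ∃ j, k = j + 1 := ⟨k - 1, by omega⟩
    have h4 : Nat.Coprime (m + 1) (j + 1) := Nat.Coprime.symm h3
    apply h4.dvd_of_dvd_mul_right
    rw [← Nat.add_one_mul_choose_eq]
    exact Nat.dvd_mul_right _ _
end
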